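/- Let b_n > 0 with b_n → 0 and Δ_n/b_n → 0, K Lipschitz and bounded, and σ² a bounded process satisfying E[sup_{r∈[0,s]} |σ²_{t+r} − σ²_t|²] ≤ C s. Then the Riemann approximation error |Δ_n Σ_{i=1}^{n−k_n+1} K_{b_n}(t_{i−1}−τ) σ²_{t_{i−1}} − ∫_0^T K_{b_n}(t−τ) σ²_t dt| is O_P(1/(m_n √Δ_n)), where b_n = m_n Δ_n and k_n ≍ Δ_n^{−1/2}. -/

import Mathlib

open MeasureTheory Set Filter

/-!
The error on a grid cell `[t, t + Δ]` is controlled by the first moment of the oscillation of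
`K_b(· - τ) σ²`. The kernel contributes `Δ / b²` by the Lipschitz property, and the process
contributes `√Δ / b` because Cauchy–Schwarz bounds `E|σ²_{t+r} - σ²_t|` by the square root of the
second moment of the local supremum. Summed over the cells, and with `b = m Δ`, these are
`1 / (m √Δ)²` and `1 / (m √Δ)`. The roughly `1 / (θ √Δ)` omitted terms are each of size `Δ / b`,
which adds another `1 / (m √Δ)`.

The integral of the squared supremum is only informative if that supremum is a.e.-measurable (a
non-integrable function has Bochner integral `0`). The superlevel sets of an uncountable supremum of
jointly measurable functions are projections of measurable sets, so this rests on the measurable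
projection theorem.
-/

/-! ### Measurable projections -/

section AnalyticSet

lemma exists_finset_forall_eqOn_imp_mem {ι : Type*} {α : ι → Type*}
    [∀ i, TopologicalSpace (α i)] {L U : Set (∀ i, α i)} (hL : IsCompact L) (hU : IsOpen U)
    (hLU : L ⊆ U) : ∃ I : Finset ι, ∀ y ∈ L, ∀ x, (∀ i ∈ I, x i = y i) → x ∈ U := by
  classical
  refine hL.induction_on (p := fun S => ∃ I : Finset ι, ∀ y ∈ S, ∀ x, (∀ i ∈ I, x i = y i) → x ∈ U)
    ⟨∅, by simp⟩ ?mono ?union ?nhds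
  case mono => exact fun S S' hSS' ⟨I, hI⟩ => ⟨I, fun y hy => hI y (hSS' hy)⟩
  case union =>
    rintro S S' ⟨I, hI⟩ ⟨I', hI'⟩
    refine ⟨I ∪ I', fun y hy x hxy => hy.elim (fun hyS => ?_) fun hyS' => ?_⟩
    · exact hI y hyS x fun i hi => hxy i (Finset.mem_union_left _ hi)
    · exact hI' y hyS' x fun i hi => hxy i (Finset.mem_union_right _ hi)
  case nhds =>
    intro y hy
    obtain ⟨I, V, hV, hVU⟩ := isOpen_pi_iff.1 hU y (hLU hy)
    refine ⟨(I : Set ι).pi V, mem_nhdsWithin_of_mem_nhds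
      (set_pi_mem_nhds I.finite_toSet fun i hi => (hV i hi).1.mem_nhds (hV i hi).2), I, ?_⟩
    exact fun z hz x hxz => hVU fun i hi => (hxz i hi).symm ▸ hz i hi

variable {X : Type*} [MeasurableSpace X]

lemma exists_lt_measure_image_inter_le {Y : Type*} {μ : Measure X} {c : ENNReal} {f : Y → X}
    {S : Set Y} (hS : c < μ (f '' S)) (g : Y → ℕ) :
    ∃ M, c < μ (f '' (S ∩ g ⁻¹' Iic M)) := by
  have hmono : Monotone fun M => f '' (S ∩ g ⁻¹' Iic M) := fun M M' hM =>
    image_mono (inter_subset_inter_right _ (preimage_mono (Iic_subset_Iic.2 hM)))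
  have hunion : ⋃ M, f '' (S ∩ g ⁻¹' Iic M) = f '' S := by
    rw [← image_iUnion, ← inter_iUnion, ← preimage_iUnion, iUnion_Iic, preimage_univ, inter_univ]
  rw [← hunion, hmono.measure_iUnion] at hS
  exact lt_iSup_iff.1 hS

lemma exists_forall_lt_measure_image_pi_Iic {μ : Measure X} {c : ENNReal} {f : (ℕ → ℕ) → X}
    (hc : c < μ (range f)) :
    ∃ N : ℕ → ℕ, ∀ k, c < μ (f '' (Iio k).pi fun i => Iic (N i)) := by
  choose! M hM using fun (S : Set (ℕ → ℕ)) (k : ℕ) (hS : c < μ (f '' S)) =>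
    exists_lt_measure_image_inter_le hS fun x => x k
  let S : ℕ → Set (ℕ → ℕ) := Nat.rec univ fun k S => S ∩ (fun x => x k) ⁻¹' Iic (M S k)
  have hS : ∀ k, c < μ (f '' S k) := by
    intro k
    induction k with
    | zero => simpa [S] using hc
    | succ k ih => exact hM _ k ih
  have hSpi : ∀ k, S k = (Iio k).pi fun i => Iic (M (S i) i) := by
    intro k
    induction k with
    | zero => simp [S]
    | succ k ih =>
      rw [← Order.succ_eq_add_one, Order.Iio_succ_eq_insert, insert_pi, ← ih, inter_comm]
      rfl
  exact ⟨fun k => M (S k) k, fun k => hSpi k ▸ hS k⟩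

-- Bounding the coordinates of Baire space one at a time costs arbitrarily little measure at each
-- stage. An open set around the image of the limiting compact box already contains the image of
-- some stage, so outer regularity passes the lower bound to the limit.
theorem innerRegularWRT_isCompact_analyticSet [TopologicalSpace X] (μ : Measure X)
    [μ.OuterRegular] : μ.InnerRegularWRT IsCompact AnalyticSet := by
  intro A hA c hc
  rw [AnalyticSet] at hA
  obtain rfl | ⟨f, hf, rfl⟩ := hA
  · simp at hc
  obtain ⟨c', hcc', hc'⟩ := exists_between hc
  obtain ⟨N, hN⟩ := exists_forall_lt_measure_image_pi_Iic hc'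
  let L : Set (ℕ → ℕ) := univ.pi fun i => Iic (N i)
  have hL : IsCompact L := isCompact_univ_pi fun i => (finite_Iic (N i)).isCompact
  refine ⟨f '' L, image_subset_range f L, hL.image hf, hcc'.trans_le ?_⟩
  rw [(f '' L).measure_eq_iInf_isOpen μ]
  refine le_iInf fun U => le_iInf fun hLU => le_iInf fun hU => ?_
  obtain ⟨I, hI⟩ := exists_finset_forall_eqOn_imp_mem hL (hU.preimage hf) (image_subset_iff.1 hLU)
  obtain ⟨k, hk⟩ := I.exists_nat_subset_range
  refine (hN k).le.trans (measure_mono (image_subset_iff.2 fun x hx => ?_))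
  refine hI (fun i => min (x i) (N i)) (fun i _ => mem_Iic.2 (min_le_right _ _)) x fun i hi => ?_
  exact (min_eq_left (hx i (Finset.mem_range.1 (hk hi)))).symm

theorem nullMeasurableSet_of_innerRegularWRT {μ : Measure X} {p q : Set X → Prop}
    (hpq : μ.InnerRegularWRT p q) (hp : ∀ F, p F → NullMeasurableSet F μ) {A : Set X} (hA : q A)
    (hμA : μ A ≠ ⊤) : NullMeasurableSet A μ := by
  rcases eq_or_ne (μ A) 0 with hzero | hpos
  · exact NullMeasurableSet.of_null hzero
  obtain ⟨u, -, hu, hulim⟩ := exists_seq_strictMono_tendsto' (pos_iff_ne_zero.2 hpos)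
  choose F hFA hpF hFu using fun k => hpq hA (u k) (hu k).2
  have hFmeas : NullMeasurableSet (⋃ k, F k) μ := NullMeasurableSet.iUnion fun k => hp _ (hpF k)
  have hle : μ A ≤ μ (⋃ k, F k) :=
    le_of_tendsto' hulim fun k => (hFu k).le.trans (measure_mono (subset_iUnion F k))
  exact hFmeas.congr (ae_eq_of_subset_of_measure_ge (iUnion_subset hFA) hle hFmeas hμA)

theorem nullMeasurableSet_of_analyticSet [TopologicalSpace X] [T2Space X]
    [OpensMeasurableSpace X] {μ : Measure X} [IsFiniteMeasure μ] [μ.OuterRegular] {A : Set X}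
    (hA : AnalyticSet A) : NullMeasurableSet A μ :=
  nullMeasurableSet_of_innerRegularWRT (innerRegularWRT_isCompact_analyticSet μ)
    (fun _ hF => hF.measurableSet.nullMeasurableSet) hA (measure_ne_top μ A)

end AnalyticSet

section Projection

variable {E Ω : Type*} [MeasurableSpace E] [MeasurableSpace Ω]

theorem exists_eq_preimage_prodMap_cantor {B : Set (E × Ω)} (hB : MeasurableSet B) :
    ∃ g : Ω → ℕ → Bool, Measurable g ∧
      ∃ B' : Set (E × (ℕ → Bool)), MeasurableSet B' ∧ B = Prod.map id g ⁻¹' B' := by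
  induction B, hB using MeasurableSpace.induction_on_inter generateFrom_prod.symm
    isPiSystem_prod with
  | empty => exact ⟨fun _ _ => false, measurable_const, ∅, MeasurableSet.empty, rfl⟩
  | basic B hB =>
    classical
    obtain ⟨s, hs, t, ht, rfl⟩ := hB
    refine ⟨fun ω _ => decide (ω ∈ t), measurable_pi_lambda _ fun _ =>
      measurable_to_bool (by convert! ht; ext; simp), s ×ˢ ((fun z => z 0) ⁻¹' {true}), ?_, ?_⟩
    · exact hs.prod (measurable_pi_apply 0 (measurableSet_singleton true))
    · ext ⟨x, ω⟩
      simp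
  | compl B _ ih =>
    obtain ⟨g, hg, B', hB', rfl⟩ := ih
    exact ⟨g, hg, B'ᶜ, hB'.compl, rfl⟩
  | iUnion f _ _ ih =>
    -- Countably many Cantor-valued maps are merged into one along `ℕ × ℕ ≃ ℕ`.
    choose g hg B' hB' hf using ih
    refine ⟨fun ω k => g k.unpair.1 ω k.unpair.2, measurable_pi_lambda _ fun k =>
      (measurable_pi_apply _).comp (hg _),
      ⋃ n, Prod.map id (fun (z : ℕ → Bool) k => z (Nat.pair n k)) ⁻¹' B' n, ?_, ?_⟩
    · exact MeasurableSet.iUnion fun n => (measurable_id.prodMap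
        (measurable_pi_lambda _ fun k => measurable_pi_apply _)) (hB' n)
    · simp_rw [hf, preimage_iUnion]
      congr! 2 with n
      ext ⟨x, ω⟩
      simp

variable [StandardBorelSpace E] {P : Measure Ω} [IsFiniteMeasure P]

/-- **Measurable projection theorem**. -/
theorem nullMeasurableSet_image_snd {B : Set (E × Ω)} (hB : MeasurableSet B) :
    NullMeasurableSet (Prod.snd '' B) P := by
  obtain ⟨g, hg, B', hB', rfl⟩ := exists_eq_preimage_prodMap_cantor hB
  have hproj : NullMeasurableSet (Prod.snd '' B') (P.map g) :=
    nullMeasurableSet_of_analyticSet (hB'.analyticSet_image measurable_snd)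
  have himage : Prod.snd '' (Prod.map id g ⁻¹' B') = g ⁻¹' (Prod.snd '' B') := by
    ext ω
    simp
  exact himage ▸ hproj.preimage (hg.quasiMeasurePreserving P)

theorem aemeasurable_iSup_of_measurable_uncurry [Nonempty E] {α : Type*}
    [ConditionallyCompleteLinearOrder α] [TopologicalSpace α] [OrderTopology α]
    [SecondCountableTopology α] [MeasurableSpace α] [BorelSpace α] {f : E → Ω → α}
    (hf : Measurable (Function.uncurry f)) (hbdd : ∀ ω, BddAbove (range fun x => f x ω)) :
    AEMeasurable (fun ω => ⨆ x, f x ω) P := by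
  have hIoi : ∀ a, NullMeasurableSet ((fun ω => ⨆ x, f x ω) ⁻¹' Ioi a) P := by
    intro a
    convert! nullMeasurableSet_image_snd (P := P) (hf (measurableSet_Ioi (a := a))) using 1
    ext ω
    simp [lt_ciSup_iff (hbdd ω)]
  have hnull : @Measurable (NullMeasurableSpace Ω P) α _ _ fun ω => ⨆ x, f x ω :=
    measurable_of_Ioi hIoi
  exact NullMeasurable.aemeasurable hnull

end Projection

/-! ### Moments of increments -/

section Moments

variable {Ω : Type*} [MeasurableSpace Ω] {P : Measure Ω}

lemma sq_integral_le_integral_sq [IsProbabilityMeasure P] {f : Ω → ℝ} (hf : MemLp f 2 P) :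
    (∫ ω, f ω ∂P) ^ 2 ≤ ∫ ω, f ω ^ 2 ∂P :=
  sub_nonneg.1 ((ProbabilityTheory.variance_nonneg f P).trans_eq
    (ProbabilityTheory.variance_eq_sub hf))

lemma sq_integral_le_integral_sq_iSup [IsProbabilityMeasure P] {E : Type*} [MeasurableSpace E]
    [StandardBorelSpace E] {f : E → Ω → ℝ} (hf : Measurable (Function.uncurry f))
    (hf_nonneg : ∀ x ω, 0 ≤ f x ω) {B : ℝ} (hfB : ∀ x ω, f x ω ≤ B) (x : E) :
    (∫ ω, f x ω ∂P) ^ 2 ≤ ∫ ω, (⨆ y, f y ω) ^ 2 ∂P := by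
  have : Nonempty E := ⟨x⟩
  have hbdd : ∀ ω, BddAbove (range fun y => f y ω) := fun ω =>
    ⟨B, forall_mem_range.2 fun y => hfB y ω⟩
  have hle_iSup : ∀ ω, f x ω ≤ ⨆ y, f y ω := fun ω => le_ciSup (hbdd ω) x
  have hf_memLp : MemLp (f x) 2 P :=
    MemLp.of_bound hf.of_uncurry_left.aestronglyMeasurable B
      (ae_of_all _ fun ω => (Real.norm_of_nonneg (hf_nonneg x ω)).trans_le (hfB x ω))
  have hiSup_memLp : MemLp (fun ω => ⨆ y, f y ω) 2 P :=
    MemLp.of_bound (aemeasurable_iSup_of_measurable_uncurry hf hbdd).aestronglyMeasurable B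
      (ae_of_all _ fun ω => (Real.norm_of_nonneg ((hf_nonneg x ω).trans (hle_iSup ω))).trans_le
        (ciSup_le fun y => hfB y ω))
  exact (sq_integral_le_integral_sq hf_memLp).trans
    (integral_mono hf_memLp.integrable_sq hiSup_memLp.integrable_sq fun ω =>
      pow_le_pow_left₀ (hf_nonneg x ω) (hle_iSup ω) 2)

theorem integral_abs_increment_le_sqrt [IsProbabilityMeasure P] {X : ℝ → Ω → ℝ}
    (hX : Measurable (Function.uncurry X)) {M : ℝ} (hXM : ∀ t ω, |X t ω| ≤ M) {t s v : ℝ}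
    (hv : ∫ ω, (⨆ r : Icc (0 : ℝ) s, |X (t + (r : ℝ)) ω - X t ω|) ^ 2 ∂P ≤ v) {r : ℝ}
    (hr : r ∈ Icc 0 s) : ∫ ω, |X (t + r) ω - X t ω| ∂P ≤ √v := by
  have : StandardBorelSpace (Icc (0 : ℝ) s) := measurableSet_Icc.standardBorel
  have hmeas : Measurable (Function.uncurry fun (u : Icc (0 : ℝ) s) ω =>
      |X (t + (u : ℝ)) ω - X t ω|) :=
    ((hX.comp (f := fun p : Icc (0 : ℝ) s × Ω => (t + (p.1 : ℝ), p.2)) (by fun_prop)).sub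
      (hX.of_uncurry_left.comp measurable_snd)).abs
  exact Real.le_sqrt_of_sq_le ((sq_integral_le_integral_sq_iSup hmeas (fun _ _ => abs_nonneg _)
    (fun _ ω => (abs_sub _ _).trans (add_le_add (hXM _ ω) (hXM _ ω))) ⟨r, hr⟩).trans hv)

lemma integral_abs_mul_sub_mul_le {Y Z : Ω → ℝ} (hY : Integrable Y P) (hZ : Integrable Z P)
    (u v : ℝ) :
    ∫ ω, |u * Y ω - v * Z ω| ∂P ≤ |u - v| * ∫ ω, |Y ω| ∂P + |v| * ∫ ω, |Y ω - Z ω| ∂P := by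
  have hY' : Integrable (fun ω => |u - v| * |Y ω|) P := hY.abs.const_mul _
  have hYZ : Integrable (fun ω => |v| * |Y ω - Z ω|) P := (hY.sub hZ).abs.const_mul _
  rw [← integral_const_mul, ← integral_const_mul, ← integral_add hY' hYZ]
  refine integral_mono ((hY.const_mul u).sub (hZ.const_mul v)).abs (hY'.add hYZ) fun ω => ?_
  calc |u * Y ω - v * Z ω| = |(u - v) * Y ω + v * (Y ω - Z ω)| := by ring_nf
    _ ≤ |u - v| * |Y ω| + |v| * |Y ω - Z ω| := by
      simpa only [abs_mul] using abs_add_le ((u - v) * Y ω) (v * (Y ω - Z ω))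

end Moments

/-! ### Left-endpoint Riemann sums of random functions -/

section RiemannSum

variable {Ω E : Type*} [MeasurableSpace Ω] {P : Measure Ω} [NormedAddCommGroup E]
  [NormedSpace ℝ E] {g : ℝ → Ω → E}

lemma integrable_smul_sub_intervalIntegral [SFinite P] {a c : ℝ} (hac : a ≤ c)
    (hga : Integrable (g a) P)
    (hg : Integrable (Function.uncurry g) ((volume.restrict (Ioc a c)).prod P)) :
    Integrable (fun ω => (c - a) • g a ω - ∫ t in a..c, g t ω) P := by
  simp_rw [intervalIntegral.integral_of_le hac]
  exact (hga.smul (c - a)).sub hg.integral_prod_right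

theorem integral_norm_smul_sub_intervalIntegral_le [CompleteSpace E] [SFinite P] {a c D : ℝ}
    (hac : a ≤ c) (hga : Integrable (g a) P)
    (hg : Integrable (Function.uncurry g) ((volume.restrict (Ioc a c)).prod P))
    (hD : ∀ t ∈ Ioc a c, ∫ ω, ‖g a ω - g t ω‖ ∂P ≤ D) :
    ∫ ω, ‖(c - a) • g a ω - ∫ t in a..c, g t ω‖ ∂P ≤ (c - a) * D := by
  have hdiff : Integrable (fun p : ℝ × Ω => ‖g a p.2 - g p.1 p.2‖)
      ((volume.restrict (Ioc a c)).prod P) := ((hga.comp_snd _).sub hg).norm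
  have hpointwise : ∀ᵐ ω ∂P, ‖(c - a) • g a ω - ∫ t in a..c, g t ω‖
      ≤ ∫ t in Ioc a c, ‖g a ω - g t ω‖ := by
    filter_upwards [hg.prod_left_ae] with ω hω
    have hgω : IntervalIntegrable (fun t => g t ω) volume a c :=
      (intervalIntegrable_iff_integrableOn_Ioc_of_le hac).2 hω
    rw [← intervalIntegral.integral_const,
      ← intervalIntegral.integral_sub intervalIntegrable_const hgω,
      ← intervalIntegral.integral_of_le hac]
    exact intervalIntegral.norm_integral_le_integral_norm hac
  calc
    ∫ ω, ‖(c - a) • g a ω - ∫ t in a..c, g t ω‖ ∂P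
      ≤ ∫ ω, (∫ t in Ioc a c, ‖g a ω - g t ω‖) ∂P :=
        integral_mono_ae (integrable_smul_sub_intervalIntegral hac hga hg).norm
          hdiff.integral_prod_right hpointwise
    _ = ∫ t in Ioc a c, ∫ ω, ‖g a ω - g t ω‖ ∂P := (integral_integral_swap hdiff).symm
    _ ≤ ∫ _ in Ioc a c, D :=
        setIntegral_mono_on hdiff.integral_prod_left (integrable_const D) measurableSet_Ioc hD
    _ = (c - a) * D := by simp [hac]

theorem integral_norm_riemannSum_sub_le [CompleteSpace E] [SFinite P] {x : ℕ → ℝ}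
    (hx : Monotone x) {n : ℕ} (hgx : ∀ j < n, Integrable (g (x j)) P)
    (hg : Integrable (Function.uncurry g) ((volume.restrict (Ioc (x 0) (x n))).prod P)) {D : ℝ}
    (hD : ∀ j < n, ∀ t ∈ Ioc (x j) (x (j + 1)), ∫ ω, ‖g (x j) ω - g t ω‖ ∂P ≤ D) :
    ∫ ω, ‖∑ j ∈ Finset.range n, (x (j + 1) - x j) • g (x j) ω - ∫ t in x 0..x n, g t ω‖ ∂P
      ≤ (x n - x 0) * D := by
  have hcell_subset : ∀ j < n, Ioc (x j) (x (j + 1)) ⊆ Ioc (x 0) (x n) := fun j hj =>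
    Ioc_subset_Ioc (hx j.zero_le) (hx hj)
  have hgcell : ∀ j < n,
      Integrable (Function.uncurry g) ((volume.restrict (Ioc (x j) (x (j + 1)))).prod P) :=
    fun j hj => hg.mono_measure
      (Measure.prod_mono (Measure.restrict_mono (hcell_subset j hj) le_rfl) le_rfl)
  let cellError : ℕ → Ω → E := fun j ω =>
    (x (j + 1) - x j) • g (x j) ω - ∫ t in x j..x (j + 1), g t ω
  have hcellError : ∀ j ∈ Finset.range n, Integrable (fun ω => ‖cellError j ω‖) P := fun j hj =>
    (integrable_smul_sub_intervalIntegral (hx j.le_succ) (hgx j (Finset.mem_range.1 hj))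
      (hgcell j (Finset.mem_range.1 hj))).norm
  have hsplit : ∀ᵐ ω ∂P,
      ‖∑ j ∈ Finset.range n, (x (j + 1) - x j) • g (x j) ω - ∫ t in x 0..x n, g t ω‖
        ≤ ∑ j ∈ Finset.range n, ‖cellError j ω‖ := by
    filter_upwards [hg.prod_left_ae] with ω hω
    have hgω : ∀ j < n, IntervalIntegrable (fun t => g t ω) volume (x j) (x (j + 1)) :=
      fun j hj => (intervalIntegrable_iff_integrableOn_Ioc_of_le (hx j.le_succ)).2
        (IntegrableOn.mono_set hω (hcell_subset j hj))
    rw [← intervalIntegral.sum_integral_adjacent_intervals hgω, ← Finset.sum_sub_distrib]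
    exact norm_sum_le _ _
  calc
    _ ≤ ∫ ω, ∑ j ∈ Finset.range n, ‖cellError j ω‖ ∂P :=
        integral_mono_of_nonneg (ae_of_all _ fun ω => norm_nonneg _)
          (integrable_finsetSum _ hcellError) hsplit
    _ = ∑ j ∈ Finset.range n, ∫ ω, ‖cellError j ω‖ ∂P := integral_finsetSum _ hcellError
    _ ≤ ∑ j ∈ Finset.range n, (x (j + 1) - x j) * D := Finset.sum_le_sum fun j hj =>
        have hj := Finset.mem_range.1 hj
        integral_norm_smul_sub_intervalIntegral_le (hx j.le_succ) (hgx j hj) (hgcell j hj) (hD j hj)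
    _ = (x n - x 0) * D := by rw [← Finset.sum_mul, Finset.sum_range_sub]

lemma norm_sum_range_sub_sum_range_le {F : Type*} [SeminormedAddCommGroup F] {a : ℕ → F} {B : ℝ}
    (ha : ∀ j, ‖a j‖ ≤ B) (N n : ℕ) :
    ‖∑ j ∈ Finset.range N, a j - ∑ j ∈ Finset.range n, a j‖ ≤ |(N : ℝ) - n| * B := by
  wlog hnN : n ≤ N generalizing N n
  · rw [norm_sub_rev, abs_sub_comm]
    exact this n N (le_of_not_ge hnN)
  rw [← Finset.sum_Ico_eq_sub _ hnN, abs_of_nonneg (sub_nonneg.2 (Nat.cast_le.2 hnN)),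
    ← Nat.cast_sub hnN, ← Nat.card_Ico, ← nsmul_eq_mul]
  exact norm_sum_le_of_le _ (fun j _ => ha j) |>.trans_eq (Finset.sum_const B)

theorem integral_norm_uniform_riemannSum_sub_le [CompleteSpace E] [IsProbabilityMeasure P]
    (hg : StronglyMeasurable (Function.uncurry g)) {B : ℝ} (hgB : ∀ t ω, ‖g t ω‖ ≤ B) {Δ D : ℝ}
    (hΔ : 0 ≤ Δ) {n : ℕ}
    (hD : ∀ j < n, ∀ r ∈ Icc 0 Δ, ∫ ω, ‖g (j * Δ) ω - g (j * Δ + r) ω‖ ∂P ≤ D) (N : ℕ) :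
    ∫ ω, ‖Δ • ∑ j ∈ Finset.range N, g (j * Δ) ω - ∫ t in (0 : ℝ)..n * Δ, g t ω‖ ∂P
      ≤ n * Δ * D + Δ * (|(N : ℝ) - n| * B) := by
  have hgt : ∀ t, Integrable (g t) P := fun t =>
    .of_bound (hg.comp_measurable measurable_prodMk_left).aestronglyMeasurable B
      (ae_of_all _ (hgB t))
  have hg_int : ∀ a c, Integrable (Function.uncurry g) ((volume.restrict (Ioc a c)).prod P) :=
    fun a c => .of_bound hg.aestronglyMeasurable B (ae_of_all _ fun p => hgB p.1 p.2)
  let x : ℕ → ℝ := fun j => j * Δ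
  have hstep : ∀ j, x (j + 1) - x j = Δ := fun j => by simp only [x]; push_cast; ring
  have hfull := integral_norm_riemannSum_sub_le (x := x)
    (monotone_nat_of_le_succ fun j => by linarith [hstep j]) (fun j _ => hgt (x j)) (hg_int _ _)
    (D := D) fun j hj t ht => by
      simpa [x] using hD j hj (t - x j) ⟨by linarith [ht.1], by linarith [ht.2, hstep j]⟩
  simp_rw [hstep, ← Finset.smul_sum] at hfull
  simp only [x, Nat.cast_zero, zero_mul, sub_zero] at hfull
  have hfull_int : Integrable (fun ω => ‖Δ • ∑ j ∈ Finset.range n, g (j * Δ) ω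
      - ∫ t in (0 : ℝ)..n * Δ, g t ω‖) P := by
    simp_rw [intervalIntegral.integral_of_le (show (0 : ℝ) ≤ n * Δ by positivity)]
    exact (((integrable_finsetSum _ fun j _ => hgt _).smul Δ).sub
      (hg_int 0 (n * Δ)).integral_prod_right).norm
  have hpointwise : ∀ ω, ‖Δ • ∑ j ∈ Finset.range N, g (j * Δ) ω - ∫ t in (0 : ℝ)..n * Δ, g t ω‖
      ≤ ‖Δ • ∑ j ∈ Finset.range n, g (j * Δ) ω - ∫ t in (0 : ℝ)..n * Δ, g t ω‖
        + Δ * (|(N : ℝ) - n| * B) := by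
    intro ω
    rw [add_comm]
    refine (norm_sub_le_norm_sub_add_norm_sub _ (Δ • ∑ j ∈ Finset.range n, g (j * Δ) ω) _).trans
      (add_le_add_left ?_ _)
    rw [← smul_sub, norm_smul, Real.norm_of_nonneg hΔ]
    exact mul_le_mul_of_nonneg_left (norm_sum_range_sub_sum_range_le (fun j => hgB _ ω) N n) hΔ
  refine (integral_mono_of_nonneg (ae_of_all _ fun ω => norm_nonneg _)
    (hfull_int.add (integrable_const _)) (ae_of_all _ hpointwise)).trans ?_
  rw [integral_add' hfull_int (integrable_const _), integral_const, probReal_univ, one_smul]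
  exact add_le_add_left hfull _

end RiemannSum

/-! ### Rescaled kernels -/

/-- The rescaled kernel `K_b(x) = K(x/b)/b` of kernel smoothing with bandwidth `b`. -/
noncomputable def rescaledKernel (K : ℝ → ℝ) (b x : ℝ) : ℝ :=
  K (x / b) / b

section Kernel

variable {K : ℝ → ℝ} {A b : ℝ} {L : NNReal}

lemma abs_rescaledKernel_le (hKA : ∀ x, |K x| ≤ A) (hb : 0 < b) (x : ℝ) :
    |rescaledKernel K b x| ≤ A / b := by
  rw [rescaledKernel, abs_div, abs_of_pos hb]
  exact div_le_div_of_nonneg_right (hKA _) hb.le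

lemma abs_rescaledKernel_sub_le (hKL : LipschitzWith L K) (b x y : ℝ) :
    |rescaledKernel K b x - rescaledKernel K b y| ≤ L * |x - y| / b ^ 2 := by
  have hlip : |K (x / b) - K (y / b)| ≤ L * (|x - y| / |b|) := by
    simpa only [Real.dist_eq, ← sub_div, abs_div] using hKL.dist_le_mul (x / b) (y / b)
  calc |rescaledKernel K b x - rescaledKernel K b y| = |K (x / b) - K (y / b)| / |b| := by
        rw [rescaledKernel, rescaledKernel, ← sub_div, abs_div]
    _ ≤ L * (|x - y| / |b|) / |b| := by gcongr
    _ = L * |x - y| / b ^ 2 := by rw [← mul_div_assoc, div_div, abs_mul_abs_self, sq]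

variable {Ω : Type*} [MeasurableSpace Ω] {P : Measure Ω} [IsProbabilityMeasure P]
  {X : ℝ → Ω → ℝ} {M : ℝ}

lemma integral_abs_rescaledKernel_mul_sub_le (hX : Measurable (Function.uncurry X))
    (hXM : ∀ t ω, |X t ω| ≤ M) (hKA : ∀ x, |K x| ≤ A) (hKL : LipschitzWith L K) (hb : 0 < b)
    (τ s t : ℝ) :
    ∫ ω, |rescaledKernel K b (s - τ) * X s ω - rescaledKernel K b (t - τ) * X t ω| ∂P
      ≤ L * |s - t| / b ^ 2 * M + A / b * ∫ ω, |X s ω - X t ω| ∂P := by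
  have hXint : ∀ t, Integrable (X t) P := fun t =>
    .of_bound hX.of_uncurry_left.aestronglyMeasurable M (ae_of_all _ (hXM t))
  have hXmean : ∫ ω, |X s ω| ∂P ≤ M :=
    (integral_mono (hXint s).abs (integrable_const M) (hXM s)).trans_eq (by simp)
  have hKst : |rescaledKernel K b (s - τ) - rescaledKernel K b (t - τ)| ≤ L * |s - t| / b ^ 2 := by
    simpa only [sub_sub_sub_cancel_right] using abs_rescaledKernel_sub_le hKL b (s - τ) (t - τ)
  refine (integral_abs_mul_sub_mul_le (hXint s) (hXint t) _ _).trans ?_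
  gcongr
  exact abs_rescaledKernel_le hKA hb _

theorem integral_abs_kernel_riemannSum_sub_le (hX : Measurable (Function.uncurry X))
    (hXM : ∀ t ω, |X t ω| ≤ M) (hKA : ∀ x, |K x| ≤ A) (hKL : LipschitzWith L K) (hb : 0 < b)
    {Δ η : ℝ} (hΔ : 0 ≤ Δ)
    (hη : ∀ t, 0 ≤ t → ∀ r ∈ Icc 0 Δ, ∫ ω, |X (t + r) ω - X t ω| ∂P ≤ η) (τ : ℝ) (N n : ℕ) :
    ∫ ω, |Δ * ∑ j ∈ Finset.range N, rescaledKernel K b (j * Δ - τ) * X (j * Δ) ω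
        - ∫ t in (0 : ℝ)..n * Δ, rescaledKernel K b (t - τ) * X t ω| ∂P
      ≤ n * Δ * (L * Δ / b ^ 2 * M + A / b * η) + Δ * (|(N : ℝ) - n| * (A / b * M)) := by
  obtain ⟨ω₀⟩ : Nonempty Ω := P.nonempty_of_neZero
  have hM : 0 ≤ M := (abs_nonneg _).trans (hXM 0 ω₀)
  have hA : 0 ≤ A := (abs_nonneg _).trans (hKA 0)
  have hKmeas : Measurable K := hKL.continuous.measurable
  refine integral_norm_uniform_riemannSum_sub_le
    (g := fun t ω => rescaledKernel K b (t - τ) * X t ω) ?meas ?bound hΔ ?osc N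
  case meas =>
    refine Measurable.stronglyMeasurable (Measurable.mul ?_ hX)
    simp only [rescaledKernel]
    fun_prop
  case bound =>
    intro t ω
    rw [norm_mul]
    exact mul_le_mul (abs_rescaledKernel_le hKA hb _) (hXM t ω) (abs_nonneg _) (by positivity)
  case osc =>
    intro j _ r hr
    refine (integral_abs_rescaledKernel_mul_sub_le hX hXM hKA hKL hb τ _ _).trans ?_
    simp_rw [abs_sub_comm (X (j * Δ) _)]
    rw [sub_add_cancel_left, abs_neg, abs_of_nonneg hr.1]
    gcongr
    · exact hr.2
    · exact hη _ (by positivity) r hr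

end Kernel

/-! ### Rate of convergence -/

lemma sum_Icc_one_cast_sub_one {R G : Type*} [Ring R] [AddCommMonoid G] (f : R → G) (N : ℕ) :
    ∑ i ∈ Finset.Icc 1 N, f ((i : R) - 1) = ∑ j ∈ Finset.range N, f j := by
  simp [← Finset.Ico_add_one_right_eq_Icc, Finset.sum_Ico_eq_sum_range]

lemma abs_cast_sub_add_one_sub_le (n k : ℕ) : |((n - k + 1 : ℕ) : ℝ) - n| ≤ k + 1 := by
  have hupper : ((n - k + 1 : ℕ) : ℝ) ≤ n + 1 := by exact_mod_cast (by omega)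
  have hlower : (n : ℝ) ≤ (n - k + 1 : ℕ) + k := by exact_mod_cast (by omega)
  rw [abs_le]
  constructor <;> linarith [k.cast_nonneg (α := ℝ)]

lemma mul_abs_cast_sub_floor_add_one_sub_le {θ s : ℝ} (hθ : 0 ≤ θ) (hs : 0 < s) (n : ℕ) :
    s * |((n - ⌊1 / (θ * s)⌋₊ + 1 : ℕ) : ℝ) - n| ≤ 1 / θ + s :=
  calc s * |((n - ⌊1 / (θ * s)⌋₊ + 1 : ℕ) : ℝ) - n| ≤ s * (⌊1 / (θ * s)⌋₊ + 1) := by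
        gcongr
        exact abs_cast_sub_add_one_sub_le n _
    _ ≤ s * (1 / (θ * s) + 1) := by
        gcongr
        exact Nat.floor_le (by positivity)
    _ = 1 / θ + s := by field_simp

lemma error_bound_eq_div_mul_sqrt {Δ m : ℝ} (hΔ : 0 < Δ) (hm : 0 < m) (T L M A C e : ℝ) :
    T * (L * Δ / (m * Δ) ^ 2 * M + A / (m * Δ) * √(C * Δ)) + Δ * (e * (A / (m * Δ) * M))
      = (T * (L * M * (m * √Δ)⁻¹ + A * √C) + A * M * (√Δ * e)) / (m * √Δ) := by
  obtain ⟨s, hs, rfl⟩ : ∃ s, 0 < s ∧ Δ = s ^ 2 :=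
    ⟨√Δ, Real.sqrt_pos.2 hΔ, (Real.sq_sqrt hΔ.le).symm⟩
  rw [Real.sqrt_mul' _ hΔ.le, Real.sqrt_sq hs.le]
  field_simp

theorem stmt_19_general {Ω : Type*} [MeasurableSpace Ω] (P : Measure Ω) [IsProbabilityMeasure P]
    (T : ℝ) (hT : 0 < T)
    (σ2 : ℝ → Ω → ℝ)
    (hσmeas : Measurable (fun p : ℝ × Ω => σ2 p.1 p.2))
    (hσbdd : ∃ M : ℝ, ∀ t ω, |σ2 t ω| ≤ M)
    (C : ℝ)
    (hσmod : ∀ t s : ℝ, 0 ≤ t → 0 ≤ s →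
      (∫ ω, (⨆ r : Icc (0 : ℝ) s, |σ2 (t + (r : ℝ)) ω - σ2 t ω|) ^ 2 ∂P) ≤ C * s)
    (K : ℝ → ℝ) (hKbdd : ∃ M : ℝ, ∀ x, |K x| ≤ M)
    (hKlip : ∃ Lip : NNReal, LipschitzWith Lip K)
    (θ : ℝ) (hθ : 0 < θ)
    (m : ℕ → ℝ) (hm : ∀ n, 0 < m n)
    (hmsq : BddAbove (range fun n : ℕ => (m n * √(T / n))⁻¹))
    (τ : ℝ) :
    ∃ C' : ℝ, ∀ n : ℕ, 1 ≤ n →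
      ∫ ω, |(T / n) * ∑ i ∈ Finset.Icc 1 (n - ⌊1 / (θ * √(T / n))⌋₊ + 1),
            rescaledKernel K (m n * (T / n)) (((i : ℝ) - 1) * (T / n) - τ)
              * σ2 (((i : ℝ) - 1) * (T / n)) ω
          - ∫ t in (0 : ℝ)..T, rescaledKernel K (m n * (T / n)) (t - τ) * σ2 t ω| ∂P
        ≤ C' / (m n * √(T / n)) := by
  obtain ⟨M, hM⟩ := hσbdd
  obtain ⟨A, hA⟩ := hKbdd
  obtain ⟨L, hL⟩ := hKlip
  obtain ⟨c, hc⟩ := hmsq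
  obtain ⟨ω₀⟩ : Nonempty Ω := P.nonempty_of_neZero
  have hM0 : 0 ≤ M := (abs_nonneg _).trans (hM 0 ω₀)
  have hA0 : 0 ≤ A := (abs_nonneg _).trans (hA 0)
  refine ⟨T * (L * M * c + A * √C) + A * M * (1 / θ + √T), fun n hn => ?_⟩
  have hΔ : 0 < T / n := by positivity
  have hΔT : T / n ≤ T := div_le_self hT.le (by exact_mod_cast hn)
  have hc_n : (m n * √(T / n))⁻¹ ≤ c := hc ⟨n, rfl⟩
  have hq : 0 < m n * √(T / n) := mul_pos (hm n) (Real.sqrt_pos.2 hΔ)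
  set k := ⌊1 / (θ * √(T / n))⌋₊
  have herror := integral_abs_kernel_riemannSum_sub_le hσmeas hM hA hL (mul_pos (hm n) hΔ) hΔ.le
    (fun t ht r hr => integral_abs_increment_le_sqrt hσmeas hM (hσmod t _ ht hΔ.le) hr)
    τ (n - k + 1) n
  have homitted : √(T / n) * |((n - k + 1 : ℕ) : ℝ) - n| ≤ 1 / θ + √T :=
    (mul_abs_cast_sub_floor_add_one_sub_le hθ.le (Real.sqrt_pos.2 hΔ) n).trans (by gcongr)
  have hreindex (ω : Ω) := sum_Icc_one_cast_sub_one
    (fun y : ℝ => rescaledKernel K (m n * (T / n)) (y * (T / n) - τ) * σ2 (y * (T / n)) ω)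
    (n - k + 1)
  simp only [hreindex]
  rw [mul_div_cancel₀ T (by positivity), error_bound_eq_div_mul_sqrt hΔ (hm n)] at herror
  refine herror.trans ?_
  gcongr

/-- For a bounded process `σ²` with modulus-of-continuity moment bound
`E[sup_{r∈[0,s]} |σ²_{t+r} − σ²_t|²] ≤ C s`, a bounded Lipschitz kernel `K`, bandwidths
`b_n = m_n Δ_n → 0` with `m_n √Δ_n → ∞` (`Δ_n = T/n`, `t_i = iΔ_n`), pre-averaging
window `k_n = ⌊1/(θ√Δ_n)⌋`, and `τ ∈ (0,T)`, the Riemann approximation error satisfies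
`E|Δ_n Σ_{i=1}^{n−k_n+1} K_{b_n}(t_{i−1}−τ) σ²_{t_{i−1}} − ∫_0^T K_{b_n}(t−τ) σ²_t dt|
≤ C'/(m_n √Δ_n)` for some constant `C'`, i.e. the error is `O_P(1/(m_n √Δ_n))`. -/
theorem stmt_19 {Ω : Type*} [MeasurableSpace Ω] (P : Measure Ω) [IsProbabilityMeasure P]
    (T : ℝ) (hT : 0 < T)
    (σ2 : ℝ → Ω → ℝ)
    (hσmeas : Measurable (fun p : ℝ × Ω => σ2 p.1 p.2))
    (hσbdd : ∃ M : ℝ, ∀ t ω, |σ2 t ω| ≤ M)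
    (C : ℝ)
    (hσmod : ∀ t s : ℝ, 0 ≤ t → 0 ≤ s →
      (∫ ω, (⨆ r : Icc (0 : ℝ) s, |σ2 (t + (r : ℝ)) ω - σ2 t ω|) ^ 2 ∂P) ≤ C * s)
    (K : ℝ → ℝ) (hKbdd : ∃ M : ℝ, ∀ x, |K x| ≤ M)
    (hKlip : ∃ Lip : NNReal, LipschitzWith Lip K)
    (θ : ℝ) (hθ : 0 < θ)
    (m : ℕ → ℕ) (hm1 : ∀ n, 1 ≤ m n)
    (hmΔ : Tendsto (fun n : ℕ => (m n : ℝ) * (T / (n : ℝ))) atTop (nhds 0))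
    (hmsq : Tendsto (fun n : ℕ => (m n : ℝ) * Real.sqrt (T / (n : ℝ))) atTop atTop)
    (τ : ℝ) (hτ : τ ∈ Ioo 0 T) :
    ∃ C' : ℝ, ∀ n : ℕ, 1 ≤ n →
      (∫ ω,
          |(T / (n : ℝ)) * ∑ i ∈ Finset.Icc 1 (n - ⌊1 / (θ * Real.sqrt (T / (n : ℝ)))⌋₊ + 1),
              (K (((((i : ℝ) - 1) * (T / (n : ℝ))) - τ) / ((m n : ℝ) * (T / (n : ℝ))))
                / ((m n : ℝ) * (T / (n : ℝ)))) * σ2 (((i : ℝ) - 1) * (T / (n : ℝ))) ω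
            - ∫ t in (0 : ℝ)..T,
                (K ((t - τ) / ((m n : ℝ) * (T / (n : ℝ))))
                  / ((m n : ℝ) * (T / (n : ℝ)))) * σ2 t ω| ∂P)
        ≤ C' / ((m n : ℝ) * Real.sqrt (T / (n : ℝ))) :=
  stmt_19_general P T hT σ2 hσmeas hσbdd C hσmod K hKbdd hKlip θ hθ (fun n => m n)
    (fun n => Nat.cast_pos.2 (hm1 n)) hmsq.inv_tendsto_atTop.bddAbove_range τ
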